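/- Let B½ be a real 5×4 matrix, T½ a real 1×4 row vector, S a real 1×5 row vector, A a real 5×5 matrix; set B := B½(B½)ᵀ and suppose the scalar T := T½(T½)ᵀ satisfies T > 0. Let r > 0, φ > 0 and β be real. Suppose the symmetric 5×5 real matrix L satisfies the algebraic Riccati equation L·U·L − L·X − Xᵀ·L − Y = 0, where U := B½(T·I₄ − (T½)ᵀT½)(B½)ᵀ, X := B½(T½)ᵀS + T(A − ½r·I₅), Y := SᵀS, and that λ ∈ ℝ satisfies r(1 + λ − ln r) − β − ½·tr((B½)ᵀLB½) = 0. Define J(t, Z, W) := −exp(−(βt + rφW + ½ZᵀLZ + λ)) for (t, Z, W) ∈ ℝ × ℝ⁵ × ℝ. Then for every (t, Z, W): ∂_t J + sup_{(ψ,c)∈ℝ²} [ ½·∑_{j,k=1}^{5} B_{jk}·∂²_{Z_j Z_k} J + ψ·∑_{j=1}^{5} (T½(B½)ᵀ)_j·∂²_{W Z_j} J + ½·ψ²·T·∂²_{WW} J + ∑_{j=1}^{5} (AZ)_j·∂_{Z_j} J + (rW − c − ψ·S·Z)·∂_W J − e^{−(βt+φc)} ] = 0, and the supremum is attained at ψ̃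 = −((T½(B½)ᵀL + S)·Z)/(rφT) and c̃ = (½ZᵀLZ + rφW + λ − ln r)/φ. -/

import Mathlib

open Matrix

/-- The conjectured value function `J(t, Z, W) = −exp(−(βt + rφW + ½ZᵀLZ + λ))` of
Theorem 1. -/
noncomputable def valueFn (L : Matrix (Fin 5) (Fin 5) ℝ) (r φ β lam : ℝ)
    (t : ℝ) (Z : Fin 5 → ℝ) (W : ℝ) : ℝ :=
  -Real.exp (-(β * t + r * φ * W + (1 / 2) * (Z ⬝ᵥ L.mulVec Z) + lam))

/-- The expression inside the supremum of the Hamilton–Jacobi–Bellman equation: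
`½∑_{j,k} B_{jk} ∂²_{Z_jZ_k}J + ψ∑_j (T½B½ᵀ)_j ∂²_{WZ_j}J + ½ψ²T ∂²_{WW}J
+ ∑_j (AZ)_j ∂_{Z_j}J + (rW − c − ψSZ) ∂_W J − e^{−(βt+φc)}`,
with all partial derivatives of the value function written via `deriv`. -/
noncomputable def hjbInner (Bh : Matrix (Fin 5) (Fin 4) ℝ) (Th : Matrix (Fin 1) (Fin 4) ℝ)
    (S : Matrix (Fin 1) (Fin 5) ℝ) (A L : Matrix (Fin 5) (Fin 5) ℝ)
    (r φ β lam T : ℝ) (t : ℝ) (Z : Fin 5 → ℝ) (W : ℝ) (ψ c : ℝ) : ℝ :=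
  (1 / 2) * ∑ j : Fin 5, ∑ k : Fin 5, (Bh * Bhᵀ) j k *
      deriv (fun x =>
        deriv (fun y => valueFn L r φ β lam t (Function.update (Function.update Z j x) k y) W)
          (Function.update Z j x k)) (Z j)
  + ψ * ∑ j : Fin 5, (Th * Bhᵀ) 0 j *
      deriv (fun w => deriv (fun x => valueFn L r φ β lam t (Function.update Z j x) w) (Z j)) W
  + (1 / 2) * ψ ^ 2 * T *
      deriv (fun w => deriv (fun w' => valueFn L r φ β lam t Z w') w) W
  + ∑ j : Fin 5, (A.mulVec Z) j *
      deriv (fun x => valueFn L r φ β lam t (Function.update Z j x) W) (Z j)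
  + (r * W - c - ψ * (S.mulVec Z 0)) * deriv (fun w => valueFn L r φ β lam t Z w) W
  - Real.exp (-(β * t + φ * c))

/-!
Adding `∂_t J` to the Hamiltonian and completing the square in `ψ` gives
`∂_t J + H(ψ, c) = J · (½ T (rφ)² (ψ − ψ̃)² + r (e^{−x} − 1 + x))` with `x = φ (c − c̃)`:
the Riccati equation cancels the terms quadratic in `Z`, the equation for `λ` the constant ones.
As `J < 0`, `T > 0`, `r > 0` and `e^{−x} ≥ 1 − x`, the right-hand side is nonpositive, and it
vanishes at `(ψ̃, c̃)`.
-/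

section Derivatives

variable {n 𝕜 : Type*} [Fintype n] [DecidableEq n] [NontriviallyNormedField 𝕜]

lemma hasDerivAt_mulVec_update {m : Type*} (M : Matrix m n 𝕜) (Z : n → 𝕜) (j : n) (k : m)
    (y : 𝕜) :
    HasDerivAt (fun x => (M *ᵥ Function.update Z j x) k) (M k j) y := by
  have hcoord := hasDerivAt_pi.mp (hasDerivAt_update Z j y)
  have hsum := HasDerivAt.fun_sum fun i (_ : i ∈ Finset.univ) => (hcoord i).const_mul (M k i)
  exact hsum.congr_deriv (dotProduct_single_one (M k) j)

lemma hasDerivAt_dotProduct_mulVec_update (M : Matrix n n 𝕜) (Z : n → 𝕜) (k : n) (y : 𝕜) :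
    HasDerivAt (fun x => Function.update Z k x ⬝ᵥ M *ᵥ Function.update Z k x)
      (((M + Mᵀ) *ᵥ Function.update Z k y) k) y := by
  have hcoord := hasDerivAt_pi.mp (hasDerivAt_update Z k y)
  have hsum := HasDerivAt.fun_sum fun i (_ : i ∈ Finset.univ) =>
    (hcoord i).fun_mul (hasDerivAt_mulVec_update M Z k i y)
  refine hsum.congr_deriv ?_
  rw [Finset.sum_add_distrib, add_mulVec, mulVec_transpose]
  exact congrArg (· + _) (single_one_dotProduct k _)

/-- The partial derivative `∂_k f` of a function of finitely many scalar variables, as the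
one-variable derivative along `Function.update` (so `0` where that derivative does not exist). -/
noncomputable def partialDeriv (k : n) (f : (n → 𝕜) → 𝕜) (Z : n → 𝕜) : 𝕜 :=
  deriv (fun x => f (Function.update Z k x)) (Z k)

end Derivatives

section Riccati

variable {n : Type*} [Fintype n]

lemma dotProduct_mulVec_of_riccati {R : Type*} [CommRing R] {L U X Y : Matrix n n R}
    (hL : L.IsSymm) (h : L * U * L - L * X - Xᵀ * L - Y = 0) (Z : n → R) :
    (L *ᵥ Z) ⬝ᵥ U *ᵥ (L *ᵥ Z) - 2 * ((L *ᵥ Z) ⬝ᵥ X *ᵥ Z) - Z ⬝ᵥ Y *ᵥ Z = 0 := by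
  have hadj (v : n → R) : Z ⬝ᵥ L *ᵥ v = (L *ᵥ Z) ⬝ᵥ v := by
    rw [dotProduct_mulVec, ← mulVec_transpose, hL.eq]
  have hX : Z ⬝ᵥ Xᵀ *ᵥ (L *ᵥ Z) = (L *ᵥ Z) ⬝ᵥ X *ᵥ Z := dotProduct_transpose_mulVec X Z _
  have hquad : Z ⬝ᵥ (L * U * L - L * X - Xᵀ * L - Y) *ᵥ Z = 0 := by
    rw [h, zero_mulVec, dotProduct_zero]
  simp only [sub_mulVec, dotProduct_sub, ← mulVec_mulVec, hadj, hX] at hquad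
  linear_combination hquad

lemma dotProduct_vecMulVec_mulVec {R m : Type*} [Fintype m] [CommSemiring R]
    (u b : n → R) (s v : m → R) :
    u ⬝ᵥ vecMulVec b s *ᵥ v = (b ⬝ᵥ u) * (s ⬝ᵥ v) := by
  rw [vecMulVec_mulVec, op_smul_eq_smul, dotProduct_smul, smul_eq_mul, mul_comm,
    dotProduct_comm u]

/-- The algebraic Riccati equation `L U L − L X − Xᵀ L − Y = 0` of the model with drift matrix `A`
and covariance `B` of the state `dZ`, drift `s` and variance `T` of the excess return `dQ`, and
covariance `b` of `dQ` with `dZ`. -/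
def SolvesRiccati [DecidableEq n] {K : Type*} [Field K] (B : Matrix n n K) (b : n → K) (T : K)
    (A : Matrix n n K) (s : n → K) (r : K) (L : Matrix n n K) : Prop :=
  L * (T • B - vecMulVec b b) * L
    - L * (vecMulVec b s + T • (A - (r / 2) • (1 : Matrix n n K)))
    - (vecMulVec b s + T • (A - (r / 2) • (1 : Matrix n n K)))ᵀ * L
    - vecMulVec s s = 0

lemma SolvesRiccati.mul_drift_eq_sq [DecidableEq n] {K : Type*} [Field K] [NeZero (2 : K)]
    {B A L : Matrix n n K} {b s : n → K} {r T : K}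
    (h : SolvesRiccati B b T A s r L) (hL : L.IsSymm) (Z : n → K) :
    T * ((L *ᵥ Z) ⬝ᵥ B *ᵥ (L *ᵥ Z) - 2 * (A *ᵥ Z ⬝ᵥ L *ᵥ Z) + r * (Z ⬝ᵥ L *ᵥ Z))
      = (b ⬝ᵥ L *ᵥ Z + s ⬝ᵥ Z) ^ 2 := by
  have hquad := dotProduct_mulVec_of_riccati hL h Z
  simp only [sub_mulVec, add_mulVec, smul_mulVec, one_mulVec, dotProduct_sub, dotProduct_add,
    dotProduct_smul, dotProduct_vecMulVec_mulVec, smul_eq_mul, dotProduct_comm (L *ᵥ Z) Z,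
    dotProduct_comm (L *ᵥ Z) (A *ᵥ Z)] at hquad
  linear_combination hquad - T * (Z ⬝ᵥ L *ᵥ Z) * mul_div_cancel₀ r (two_ne_zero (α := K))

end Riccati

section HJB

variable {n : Type*} [Fintype n]

/-- The conjectured value function `J`, for any finite number of state variables. -/
noncomputable def caraValueFn (L : Matrix n n ℝ) (r φ β lam t : ℝ) (Z : n → ℝ) (W : ℝ) : ℝ :=
  -Real.exp (-(β * t + r * φ * W + (1 / 2) * (Z ⬝ᵥ L *ᵥ Z) + lam))

/-- The expression inside the supremum of the Hamilton–Jacobi–Bellman equation of a candidate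
value function `J`. The model enters through the covariances `B` of `dZ`, `b` of `dQ` with `dZ`
and `T` of `dQ`, and through the drifts `A Z` of `dZ` and `s ⬝ᵥ Z` of `dQ`. -/
noncomputable def hjbHamiltonian [DecidableEq n] (B : Matrix n n ℝ) (b : n → ℝ) (T : ℝ)
    (A : Matrix n n ℝ) (s : n → ℝ) (r φ β : ℝ) (J : ℝ → (n → ℝ) → ℝ → ℝ)
    (t : ℝ) (Z : n → ℝ) (W ψ c : ℝ) : ℝ :=
  (1 / 2) * ∑ j, ∑ k, B j k * partialDeriv j (partialDeriv k fun Z' => J t Z' W) Z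
  + ψ * ∑ j, b j * deriv (fun w => partialDeriv j (fun Z' => J t Z' w) Z) W
  + (1 / 2) * ψ ^ 2 * T * deriv (fun w => deriv (fun w' => J t Z w') w) W
  + ∑ j, (A *ᵥ Z) j * partialDeriv j (fun Z' => J t Z' W) Z
  + (r * W - c - ψ * (s ⬝ᵥ Z)) * deriv (fun w => J t Z w) W
  - Real.exp (-(β * t + φ * c))

/-- The stock demand `ψ̃` that maximizes the Hamiltonian of `caraValueFn`. -/
noncomputable def optimalDemand (b : n → ℝ) (T : ℝ) (s : n → ℝ) (L : Matrix n n ℝ) (r φ : ℝ)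
    (Z : n → ℝ) : ℝ :=
  -((b ᵥ* L + s) ⬝ᵥ Z) / (r * φ * T)

/-- The consumption `c̃` that maximizes the Hamiltonian of `caraValueFn`. -/
noncomputable def optimalConsumption (L : Matrix n n ℝ) (r φ lam : ℝ) (Z : n → ℝ) (W : ℝ) : ℝ :=
  ((1 / 2) * (Z ⬝ᵥ L *ᵥ Z) + r * φ * W + lam - Real.log r) / φ

variable {B A L : Matrix n n ℝ} {b s : n → ℝ} {r φ β lam T : ℝ}

lemma caraValueFn_neg (L : Matrix n n ℝ) (r φ β lam t : ℝ) (Z : n → ℝ) (W : ℝ) :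
    caraValueFn L r φ β lam t Z W < 0 :=
  neg_neg_of_pos (Real.exp_pos _)

lemma hasDerivAt_caraValueFn_time (L : Matrix n n ℝ) (r φ β lam t : ℝ) (Z : n → ℝ) (W : ℝ) :
    HasDerivAt (fun t' => caraValueFn L r φ β lam t' Z W)
      (-caraValueFn L r φ β lam t Z W * β) t := by
  have hexponent := ((((hasDerivAt_id t).const_mul β).add_const (r * φ * W)).add_const
    ((1 / 2) * (Z ⬝ᵥ L *ᵥ Z))).add_const lam
  exact hexponent.neg.exp.neg.congr_deriv (by simp [caraValueFn])

lemma hasDerivAt_caraValueFn_wealth (L : Matrix n n ℝ) (r φ β lam t : ℝ) (Z : n → ℝ) (W : ℝ) :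
    HasDerivAt (fun w => caraValueFn L r φ β lam t Z w)
      (-caraValueFn L r φ β lam t Z W * (r * φ)) W := by
  have hexponent := ((((hasDerivAt_id W).const_mul (r * φ)).const_add (β * t)).add_const
    ((1 / 2) * (Z ⬝ᵥ L *ᵥ Z))).add_const lam
  exact hexponent.neg.exp.neg.congr_deriv (by simp [caraValueFn])

lemma deriv_deriv_caraValueFn_wealth (L : Matrix n n ℝ) (r φ β lam t : ℝ) (Z : n → ℝ) (W : ℝ) :
    deriv (fun w => deriv (fun w' => caraValueFn L r φ β lam t Z w') w) W
      = caraValueFn L r φ β lam t Z W * (r * φ) ^ 2 := by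
  simp only [(hasDerivAt_caraValueFn_wealth L r φ β lam t Z _).deriv]
  rw [((hasDerivAt_caraValueFn_wealth L r φ β lam t Z W).fun_neg.mul_const _).deriv]
  ring

section PartialDerivatives

variable [DecidableEq n]

lemma hasDerivAt_caraValueFn_update (hL : L.IsSymm) (r φ β lam t : ℝ) (Z : n → ℝ) (W : ℝ)
    (k : n) :
    HasDerivAt (fun x => caraValueFn L r φ β lam t (Function.update Z k x) W)
      (-caraValueFn L r φ β lam t Z W * (L *ᵥ Z) k) (Z k) := by
  have hquad := hasDerivAt_dotProduct_mulVec_update L Z k (Z k)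
  rw [hL.eq, Function.update_eq_self, add_mulVec, Pi.add_apply] at hquad
  have hexponent := ((hquad.const_mul (1 / 2)).const_add (β * t + r * φ * W)).add_const lam
  refine hexponent.neg.exp.neg.congr_deriv ?_
  simp only [Pi.neg_apply, Function.update_eq_self, caraValueFn]
  ring

lemma partialDeriv_caraValueFn (hL : L.IsSymm) (r φ β lam t : ℝ) (Z : n → ℝ) (W : ℝ) (k : n) :
    partialDeriv k (fun Z' => caraValueFn L r φ β lam t Z' W) Z
      = -caraValueFn L r φ β lam t Z W * (L *ᵥ Z) k :=
  (hasDerivAt_caraValueFn_update hL r φ β lam t Z W k).deriv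

lemma deriv_partialDeriv_caraValueFn (hL : L.IsSymm) (r φ β lam t : ℝ) (Z : n → ℝ) (W : ℝ)
    (j : n) :
    deriv (fun w => partialDeriv j (fun Z' => caraValueFn L r φ β lam t Z' w) Z) W
      = caraValueFn L r φ β lam t Z W * (r * φ) * (L *ᵥ Z) j := by
  simp only [partialDeriv_caraValueFn hL]
  rw [((hasDerivAt_caraValueFn_wealth L r φ β lam t Z W).fun_neg.mul_const _).deriv]
  ring

lemma partialDeriv_partialDeriv_caraValueFn (hL : L.IsSymm) (r φ β lam t : ℝ) (Z : n → ℝ)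
    (W : ℝ) (j k : n) :
    partialDeriv j (partialDeriv k fun Z' => caraValueFn L r φ β lam t Z' W) Z
      = caraValueFn L r φ β lam t Z W * ((L *ᵥ Z) j * (L *ᵥ Z) k - L k j) := by
  have hgradient : partialDeriv k (fun Z' => caraValueFn L r φ β lam t Z' W)
      = fun Z' => -caraValueFn L r φ β lam t Z' W * (L *ᵥ Z') k :=
    funext fun Z' => partialDeriv_caraValueFn hL r φ β lam t Z' W k
  have hproduct := (hasDerivAt_caraValueFn_update hL r φ β lam t Z W j).fun_neg.fun_mul
    (hasDerivAt_mulVec_update L Z j k (Z j))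
  rw [hgradient, partialDeriv, hproduct.deriv, Function.update_eq_self]
  ring

lemma sum_sum_mul_partialDeriv_caraValueFn (B : Matrix n n ℝ) (hL : L.IsSymm)
    (r φ β lam t : ℝ) (Z : n → ℝ) (W : ℝ) :
    ∑ j, ∑ k, B j k * partialDeriv j (partialDeriv k fun Z' => caraValueFn L r φ β lam t Z' W) Z
      = caraValueFn L r φ β lam t Z W * ((L *ᵥ Z) ⬝ᵥ B *ᵥ (L *ᵥ Z) - trace (B * L)) := by
  have htrace : trace (B * L) = ∑ j, ∑ k, B j k * L k j := rfl
  have hquad : (L *ᵥ Z) ⬝ᵥ B *ᵥ (L *ᵥ Z) = ∑ j, ∑ k, (L *ᵥ Z) j * (B j k * (L *ᵥ Z) k) := by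
    simp only [← Finset.mul_sum]
    rfl
  simp only [partialDeriv_partialDeriv_caraValueFn hL, htrace, hquad,
    ← Finset.sum_sub_distrib, Finset.mul_sum]
  exact Finset.sum_congr rfl fun j _ => Finset.sum_congr rfl fun k _ => by ring

lemma hjbHamiltonian_caraValueFn (B : Matrix n n ℝ) (b : n → ℝ) (T : ℝ) (A : Matrix n n ℝ)
    (s : n → ℝ) (hL : L.IsSymm) (r φ β lam t : ℝ) (Z : n → ℝ) (W ψ c : ℝ) :
    hjbHamiltonian B b T A s r φ β (caraValueFn L r φ β lam) t Z W ψ c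
      = caraValueFn L r φ β lam t Z W *
          ((1 / 2) * ((L *ᵥ Z) ⬝ᵥ B *ᵥ (L *ᵥ Z) - trace (B * L))
            + ψ * (r * φ) * (b ⬝ᵥ L *ᵥ Z + s ⬝ᵥ Z) + (1 / 2) * T * (r * φ * ψ) ^ 2
            - A *ᵥ Z ⬝ᵥ L *ᵥ Z - (r * W - c) * (r * φ))
        - Real.exp (-(β * t + φ * c)) := by
  have hsum (u : n → ℝ) (a : ℝ) : ∑ j, u j * (a * (L *ᵥ Z) j) = a * (u ⬝ᵥ L *ᵥ Z) := by
    simp only [mul_left_comm _ a, ← Finset.mul_sum, dotProduct]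
  rw [hjbHamiltonian, sum_sum_mul_partialDeriv_caraValueFn B hL, deriv_deriv_caraValueFn_wealth,
    (hasDerivAt_caraValueFn_wealth L r φ β lam t Z W).deriv]
  simp only [deriv_partialDeriv_caraValueFn hL]
  simp only [partialDeriv_caraValueFn hL, hsum]
  ring

end PartialDerivatives

lemma neg_exp_eq_caraValueFn_mul (hr : 0 < r) (hφ : φ ≠ 0) (L : Matrix n n ℝ)
    (β lam t : ℝ) (Z : n → ℝ) (W c : ℝ) :
    -Real.exp (-(β * t + φ * c)) = caraValueFn L r φ β lam t Z W *
      (r * Real.exp (-(φ * (c - optimalConsumption L r φ lam Z W)))) := by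
  have hc : φ * optimalConsumption L r φ lam Z W
      = (1 / 2) * (Z ⬝ᵥ L *ᵥ Z) + r * φ * W + lam - Real.log r := mul_div_cancel₀ _ hφ
  nth_rw 2 [← Real.exp_log hr]
  rw [caraValueFn, neg_mul, ← Real.exp_add, ← Real.exp_add, mul_sub, hc]
  ring_nf

variable [DecidableEq n]

lemma deriv_add_hjbHamiltonian_caraValueFn (hL : L.IsSymm) (hr : 0 < r) (hφ : φ ≠ 0)
    (hT : T ≠ 0) (hRiccati : SolvesRiccati B b T A s r L)
    (hlam : r * (1 + lam - Real.log r) - β - (1 / 2) * trace (B * L) = 0)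
    (t : ℝ) (Z : n → ℝ) (W ψ c : ℝ) :
    deriv (fun t' => caraValueFn L r φ β lam t' Z W) t
        + hjbHamiltonian B b T A s r φ β (caraValueFn L r φ β lam) t Z W ψ c
      = caraValueFn L r φ β lam t Z W *
          ((1 / 2) * T * (r * φ * (ψ - optimalDemand b T s L r φ Z)) ^ 2
            + r * (Real.exp (-(φ * (c - optimalConsumption L r φ lam Z W))) - 1
              + φ * (c - optimalConsumption L r φ lam Z W))) := by
  rw [(hasDerivAt_caraValueFn_time L r φ β lam t Z W).deriv,
    hjbHamiltonian_caraValueFn B b T A s hL, sub_eq_add_neg,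
    neg_exp_eq_caraValueFn_mul hr hφ L β lam t Z W]
  have hdemand : b ⬝ᵥ L *ᵥ Z + s ⬝ᵥ Z = -(T * (r * φ * optimalDemand b T s L r φ Z)) := by
    rw [optimalDemand, add_dotProduct, ← dotProduct_mulVec]
    field
  have hconsumption : φ * optimalConsumption L r φ lam Z W
      = (1 / 2) * (Z ⬝ᵥ L *ᵥ Z) + r * φ * W + lam - Real.log r := mul_div_cancel₀ _ hφ
  have hdrift : (L *ᵥ Z) ⬝ᵥ B *ᵥ (L *ᵥ Z) - 2 * (A *ᵥ Z ⬝ᵥ L *ᵥ Z) + r * (Z ⬝ᵥ L *ᵥ Z)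
      = T * (r * φ * optimalDemand b T s L r φ Z) ^ 2 := by
    refine mul_left_cancel₀ hT ((hRiccati.mul_drift_eq_sq hL Z).trans ?_)
    rw [hdemand]
    ring
  linear_combination caraValueFn L r φ β lam t Z W *
    (ψ * (r * φ) * hdemand + hdrift / 2 + r * hconsumption + hlam)

theorem valueFn_solves_HJB_general (hL : L.IsSymm) (hr : 0 < r) (hφ : φ ≠ 0) (hT : 0 < T)
    (hRiccati : SolvesRiccati B b T A s r L)
    (hlam : r * (1 + lam - Real.log r) - β - (1 / 2) * trace (B * L) = 0)
    (t : ℝ) (Z : n → ℝ) (W : ℝ) :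
    deriv (fun t' => caraValueFn L r φ β lam t' Z W) t
        + hjbHamiltonian B b T A s r φ β (caraValueFn L r φ β lam) t Z W
            (optimalDemand b T s L r φ Z) (optimalConsumption L r φ lam Z W) = 0
      ∧ ∀ ψ c : ℝ,
          hjbHamiltonian B b T A s r φ β (caraValueFn L r φ β lam) t Z W ψ c
            ≤ hjbHamiltonian B b T A s r φ β (caraValueFn L r φ β lam) t Z W
                (optimalDemand b T s L r φ Z) (optimalConsumption L r φ lam Z W) := by
  have hidentity := deriv_add_hjbHamiltonian_caraValueFn hL hr hφ hT.ne' hRiccati hlam t Z W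
  have hoptimal : deriv (fun t' => caraValueFn L r φ β lam t' Z W) t
      + hjbHamiltonian B b T A s r φ β (caraValueFn L r φ β lam) t Z W
          (optimalDemand b T s L r φ Z) (optimalConsumption L r φ lam Z W) = 0 := by
    simp [hidentity]
  refine ⟨hoptimal, fun ψ c => ?_⟩
  have hexp := Real.add_one_le_exp (-(φ * (c - optimalConsumption L r φ lam Z W)))
  have hnonpos := (hidentity ψ c).trans_le <|
    mul_nonpos_of_nonpos_of_nonneg (caraValueFn_neg L r φ β lam t Z W).le <|
      add_nonneg (by positivity) (mul_nonneg hr.le (by linarith))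
  linarith

end HJB

section RowMatrices

variable {R l m n : Type*}

lemma transpose_mul_eq_vecMulVec [NonUnitalNonAssocSemiring R] (u : Matrix (Fin 1) m R)
    (v : Matrix (Fin 1) n R) : uᵀ * v = vecMulVec (u 0) (v 0) := by
  ext i j
  simp [mul_apply, vecMulVec_apply]

variable [Fintype m]

lemma mul_transpose_mul_eq_vecMulVec [CommSemiring R] (M : Matrix l m R)
    (u : Matrix (Fin 1) m R) (v : Matrix (Fin 1) n R) :
    M * uᵀ * v = vecMulVec ((u * Mᵀ) 0) (v 0) := by
  rw [← transpose_mul_eq_vecMulVec, transpose_mul, transpose_transpose]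

lemma mul_smul_one_sub_mul_transpose [DecidableEq m] [CommRing R] (M : Matrix l m R)
    (u : Matrix (Fin 1) m R) (c : R) :
    M * (c • (1 : Matrix m m R) - uᵀ * u) * Mᵀ
      = c • (M * Mᵀ) - vecMulVec ((u * Mᵀ) 0) ((u * Mᵀ) 0) := by
  simp only [← mul_transpose_mul_eq_vecMulVec, Matrix.mul_sub, Matrix.sub_mul, Matrix.mul_smul,
    Matrix.smul_mul, Matrix.mul_one, Matrix.mul_assoc]

end RowMatrices

/-- Verification part of Theorem 1: if the symmetric matrix `L` solves the algebraic Riccati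
equation and `λ` satisfies `r(1 + λ − ln r) − β − ½tr(B½ᵀLB½) = 0`, then the conjectured
value function solves the stationary Hamilton–Jacobi–Bellman equation, with the supremum
attained at the optimal stock demand `ψ̃ = −(T½B½ᵀL + S)Z/(rφT)` and optimal consumption
`c̃ = (½ZᵀLZ + rφW + λ − ln r)/φ`. -/
theorem valueFn_solves_HJB
    (Bh : Matrix (Fin 5) (Fin 4) ℝ) (Th : Matrix (Fin 1) (Fin 4) ℝ)
    (S : Matrix (Fin 1) (Fin 5) ℝ) (A : Matrix (Fin 5) (Fin 5) ℝ)
    (L : Matrix (Fin 5) (Fin 5) ℝ) (hLsymm : L.IsSymm)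
    (r φ β lam : ℝ) (hr : 0 < r) (hφ : 0 < φ)
    (T : ℝ) (hT : T = (Th * Thᵀ) 0 0) (hTpos : 0 < T)
    (hRiccati :
      L * (Bh * (T • (1 : Matrix (Fin 4) (Fin 4) ℝ) - Thᵀ * Th) * Bhᵀ) * L
        - L * (Bh * Thᵀ * S + T • (A - (r / 2) • (1 : Matrix (Fin 5) (Fin 5) ℝ)))
        - (Bh * Thᵀ * S + T • (A - (r / 2) • (1 : Matrix (Fin 5) (Fin 5) ℝ)))ᵀ * L
        - Sᵀ * S = 0)
    (hlam : r * (1 + lam - Real.log r) - β - (1 / 2) * Matrix.trace (Bhᵀ * L * Bh) = 0) :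
    ∀ (t : ℝ) (Z : Fin 5 → ℝ) (W : ℝ),
      deriv (fun t' => valueFn L r φ β lam t' Z W) t
        + hjbInner Bh Th S A L r φ β lam T t Z W
            (-(((Th * Bhᵀ * L + S).mulVec Z) 0) / (r * φ * T))
            (((1 / 2) * (Z ⬝ᵥ L.mulVec Z) + r * φ * W + lam - Real.log r) / φ) = 0
      ∧ ∀ ψ c : ℝ,
          hjbInner Bh Th S A L r φ β lam T t Z W ψ c
            ≤ hjbInner Bh Th S A L r φ β lam T t Z W
                (-(((Th * Bhᵀ * L + S).mulVec Z) 0) / (r * φ * T))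
                (((1 / 2) * (Z ⬝ᵥ L.mulVec Z) + r * φ * W + lam - Real.log r) / φ) := by
  rw [mul_smul_one_sub_mul_transpose, mul_transpose_mul_eq_vecMulVec,
    transpose_mul_eq_vecMulVec S] at hRiccati
  rw [trace_mul_cycle] at hlam
  exact valueFn_solves_HJB_general hLsymm hr hφ.ne' hTpos hRiccati hlam
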